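/- Let H be a Hopf algebra over a field k, suppose r ∈ H satisfies the 1-dimensional partial comodule equations, and set e := r·S(r). Then e² = e and e·e_{(1)} ⊗ e_{(2)} = e ⊗ e = e_{(1)}·e ⊗ e_{(2)} in H ⊗ H. -/

import Mathlib

open TensorProduct

/-- The five 1-dimensional partial comodule equations for an element `r` of a Hopf
algebra `H`: `ε(r) = 1`; `r ⊗ r·S(r) = r₍₁₎ ⊗ r₍₂₎·S(r)`; `r·S(r₍₁₎) ⊗ r₍₂₎ = r·S(r) ⊗ r`;
`r ⊗ S(r)·r = r₍₁₎ ⊗ S(r₍₂₎)·r`; `S(r)·r ⊗ r = S(r)·r₍₁₎ ⊗ r₍₂₎`. -/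
def OneDimPCM (k : Type*) {H : Type*} [Field k] [Ring H] [HopfAlgebra k H] (r : H) : Prop :=
  Coalgebra.counit (R := k) r = 1
  ∧ r ⊗ₜ[k] (r * HopfAlgebra.antipode (R := k) r)
      = Coalgebra.comul (R := k) r * ((1 : H) ⊗ₜ[k] HopfAlgebra.antipode (R := k) r)
  ∧ (r ⊗ₜ[k] (1 : H)) *
        (LinearMap.rTensor H (HopfAlgebra.antipode (R := k)) (Coalgebra.comul (R := k) r))
      = (r * HopfAlgebra.antipode (R := k) r) ⊗ₜ[k] r
  ∧ r ⊗ₜ[k] (HopfAlgebra.antipode (R := k) r * r)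
      = (LinearMap.lTensor H (HopfAlgebra.antipode (R := k)) (Coalgebra.comul (R := k) r))
          * ((1 : H) ⊗ₜ[k] r)
  ∧ (HopfAlgebra.antipode (R := k) r * r) ⊗ₜ[k] r
      = ((HopfAlgebra.antipode (R := k) r) ⊗ₜ[k] (1 : H)) * Coalgebra.comul (R := k) r

/-!
Under convolution, `Δ ∘ S` is a right inverse of `Δ` and `(S ⊗ S) ∘ τ ∘ Δ`, with `τ` the flip, a
left inverse, so they agree. Hence applying `S` to the untouched leg of the third and of the
fourth equation and then flipping evaluates one-sided multiples of `Δ(S r)`: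
`(1 ⊗ r) Δ(S r) = S r ⊗ e` and `Δ(S r) (r ⊗ 1) = S r r ⊗ S r`.
Multiplying the two legs of the third equation gives `r S(r) r = r`, which makes `e` idempotent.
Now expand `Δ(e) = Δ(r) Δ(S r)`: in `(e ⊗ 1) Δ(e)` the fifth equation evaluates `(S r ⊗ 1) Δ(r)`
and leaves `(r ⊗ 1) (1 ⊗ r) Δ(S r)`, while in `Δ(e) (e ⊗ 1)` evaluating `Δ(S r) (r ⊗ 1)` leaves
`Δ(r) (1 ⊗ S r)`, which is the second equation.
-/

section Convolution

open Coalgebra HopfAlgebra WithConv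
open Algebra.TensorProduct (includeLeft includeRight)

variable {R A B C : Type*} [CommSemiring R] [Semiring A] [Algebra R A] [Semiring B] [Algebra R B]
  [AddCommMonoid C] [Module R C]

theorem algHom_comp_convMul_eq_one [Coalgebra R C] (h : A →ₐ[R] B) {f g : C →ₗ[R] A}
    (hfg : toConv f * toConv g = 1) :
    toConv (h.toLinearMap ∘ₗ f) * toConv (h.toLinearMap ∘ₗ g) = 1 := by
  have hcomp := LinearMap.algHom_comp_convMul_distrib h (toConv f) (toConv g)
  rw [hfg] at hcomp
  ext x
  simpa using (LinearMap.congr_fun hcomp x).symm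

theorem toConv_map_comp_comul [CoalgebraStruct R C] (f : C →ₗ[R] A) (g : C →ₗ[R] B) :
    toConv (TensorProduct.map f g ∘ₗ comul) =
      toConv ((includeLeft : A →ₐ[R] A ⊗[R] B).toLinearMap ∘ₗ f) *
        toConv ((includeRight : B →ₐ[R] A ⊗[R] B).toLinearMap ∘ₗ g) := by
  ext x
  rw [(ℛ R x).convMul_apply]
  simp [← (ℛ R x).eq]

theorem toConv_map_comp_comm_comp_comul [CoalgebraStruct R C] (f : C →ₗ[R] A)
    (g : C →ₗ[R] B) :
    toConv (TensorProduct.map f g ∘ₗ (TensorProduct.comm R C C).toLinearMap ∘ₗ comul) =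
      toConv ((includeRight : B →ₐ[R] A ⊗[R] B).toLinearMap ∘ₗ g) *
        toConv ((includeLeft : A →ₐ[R] A ⊗[R] B).toLinearMap ∘ₗ f) := by
  ext x
  rw [(ℛ R x).convMul_apply]
  simp [← (ℛ R x).eq]

end Convolution

section Antipode

open Coalgebra HopfAlgebra WithConv
open Algebra.TensorProduct (includeLeft includeRight)

variable {R H : Type*} [CommSemiring R] [Semiring H] [HopfAlgebra R H]

theorem map_antipode_comm_comul_convMul_comul_eq_one :
    toConv (TensorProduct.map (antipode R) (antipode R) ∘ₗ
      (TensorProduct.comm R H H).toLinearMap ∘ₗ comul) * toConv comul = 1 := by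
  have hcomul := toConv_map_comp_comul (R := R) (LinearMap.id : H →ₗ[R] H) LinearMap.id
  rw [TensorProduct.map_id, LinearMap.id_comp] at hcomul
  have hleft := algHom_comp_convMul_eq_one (includeLeft : H →ₐ[R] H ⊗[R] H)
    LinearMap.antipode_mul_id
  have hright := algHom_comp_convMul_eq_one (includeRight : H →ₐ[R] H ⊗[R] H)
    LinearMap.antipode_mul_id
  rw [toConv_map_comp_comm_comp_comul, hcomul, mul_assoc,
    ← mul_assoc _ (toConv (_ ∘ₗ LinearMap.id)), hleft, one_mul, hright]

theorem comul_antipode (x : H) :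
    comul (R := R) (antipode R x) =
      TensorProduct.map (antipode R) (antipode R) (TensorProduct.comm R H H (comul x)) := by
  have hinv := left_inv_eq_right_inv map_antipode_comm_comul_convMul_comul_eq_one
    (LinearMap.comul_right_inv (R := R) (C := H))
  exact (LinearMap.congr_fun (congrArg ofConv hinv) x).symm

theorem one_tmul_mul_comul_antipode (a x : H) :
    ((1 : H) ⊗ₜ[R] a) * comul (antipode R x) =
      TensorProduct.comm R H H ((antipode R).lTensor H
        ((a ⊗ₜ[R] (1 : H)) * (antipode R).rTensor H (comul x))) := by
  rw [comul_antipode, ← (ℛ R x).eq]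
  simp [Finset.mul_sum]

theorem comul_antipode_mul_tmul_one (a x : H) :
    comul (antipode R x) * (a ⊗ₜ[R] (1 : H)) =
      TensorProduct.comm R H H ((antipode R).rTensor H
        ((antipode R).lTensor H (comul x) * ((1 : H) ⊗ₜ[R] a))) := by
  rw [comul_antipode, ← (ℛ R x).eq]
  simp [Finset.sum_mul]

theorem mul_antipode_mul_self {r : H} (hε : counit (R := R) r = 1)
    (hr : (r ⊗ₜ[R] (1 : H)) * (antipode R).rTensor H (comul r) = (r * antipode R r) ⊗ₜ[R] r) :
    r * antipode R r * r = r := by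
  calc r * antipode R r * r
      = LinearMap.mul' R H ((r ⊗ₜ[R] (1 : H)) * (antipode R).rTensor H (comul r)) := by
        rw [hr, LinearMap.mul'_apply]
    _ = r * LinearMap.mul' R H ((antipode R).rTensor H (comul r)) := by
        rw [← (ℛ R r).eq]
        simp [Finset.mul_sum, mul_assoc]
    _ = r := by
        rw [mul_antipode_rTensor_comul_apply, hε, map_one, mul_one]

theorem mul_antipode_tmul_one_mul_comul {r : H} (hreg : r * antipode R r * r = r)
    (h₃ : (r ⊗ₜ[R] (1 : H)) * (antipode R).rTensor H (comul r) = (r * antipode R r) ⊗ₜ[R] r)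
    (h₅ : (antipode R r * r) ⊗ₜ[R] r = (antipode R r ⊗ₜ[R] (1 : H)) * comul r) :
    ((r * antipode R r) ⊗ₜ[R] (1 : H)) * comul (r * antipode R r) =
      (r * antipode R r) ⊗ₜ[R] (r * antipode R r) := by
  set s := antipode R r
  have hflip : ((1 : H) ⊗ₜ[R] r) * comul s = s ⊗ₜ[R] (r * s) := by
    rw [one_tmul_mul_comul_antipode, h₃, LinearMap.lTensor_tmul, TensorProduct.comm_tmul]
  calc ((r * s) ⊗ₜ[R] (1 : H)) * comul (r * s)
      = (r ⊗ₜ[R] (1 : H)) * ((s ⊗ₜ[R] (1 : H)) * comul r) * comul s := by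
        simp [Bialgebra.comul_mul, ← mul_assoc]
    _ = (r ⊗ₜ[R] (1 : H)) * (((1 : H) ⊗ₜ[R] r) * comul s) := by
        simp [← h₅, ← mul_assoc, hreg]
    _ = (r * s) ⊗ₜ[R] (r * s) := by
        rw [hflip, Algebra.TensorProduct.tmul_mul_tmul, one_mul]

theorem comul_mul_mul_antipode_tmul_one {r : H} (hreg : r * antipode R r * r = r)
    (h₂ : r ⊗ₜ[R] (r * antipode R r) = comul r * ((1 : H) ⊗ₜ[R] antipode R r))
    (h₄ : r ⊗ₜ[R] (antipode R r * r) = (antipode R).lTensor H (comul r) * ((1 : H) ⊗ₜ[R] r)) :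
    comul (r * antipode R r) * ((r * antipode R r) ⊗ₜ[R] (1 : H)) =
      (r * antipode R r) ⊗ₜ[R] (r * antipode R r) := by
  set s := antipode R r
  have hflip : comul s * (r ⊗ₜ[R] (1 : H)) = (s * r) ⊗ₜ[R] s := by
    rw [comul_antipode_mul_tmul_one, ← h₄, LinearMap.rTensor_tmul, TensorProduct.comm_tmul]
  calc comul (r * s) * ((r * s) ⊗ₜ[R] (1 : H))
      = comul r * (comul s * (r ⊗ₜ[R] (1 : H))) * (s ⊗ₜ[R] (1 : H)) := by
        simp [Bialgebra.comul_mul, mul_assoc]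
    _ = comul r * ((1 : H) ⊗ₜ[R] s) * ((s * r * s) ⊗ₜ[R] (1 : H)) := by
        simp [hflip, mul_assoc]
    _ = (r * s) ⊗ₜ[R] (r * s) := by
        simp [← h₂, ← mul_assoc, hreg]

theorem stmt11_general {r e : H} (he : e = r * antipode R r)
    (h₁ : counit (R := R) r = 1)
    (h₂ : r ⊗ₜ[R] (r * antipode R r) = comul r * ((1 : H) ⊗ₜ[R] antipode R r))
    (h₃ : (r ⊗ₜ[R] (1 : H)) * (antipode R).rTensor H (comul r) = (r * antipode R r) ⊗ₜ[R] r)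
    (h₄ : r ⊗ₜ[R] (antipode R r * r) = (antipode R).lTensor H (comul r) * ((1 : H) ⊗ₜ[R] r))
    (h₅ : (antipode R r * r) ⊗ₜ[R] r = (antipode R r ⊗ₜ[R] (1 : H)) * comul r) :
    e * e = e
    ∧ (e ⊗ₜ[R] (1 : H)) * comul e = e ⊗ₜ[R] e
    ∧ comul e * (e ⊗ₜ[R] (1 : H)) = e ⊗ₜ[R] e := by
  subst he
  have hreg : r * antipode R r * r = r := mul_antipode_mul_self h₁ h₃
  have hidem : r * antipode R r * (r * antipode R r) = r * antipode R r := by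
    rw [← mul_assoc, hreg]
  exact ⟨hidem, mul_antipode_tmul_one_mul_comul hreg h₃ h₅,
    comul_mul_mul_antipode_tmul_one hreg h₂ h₄⟩

end Antipode

/-- if `r ∈ H` satisfies the 1-dimensional partial comodule equations and
`e := r·S(r)`, then `e² = e` and `e·e₍₁₎ ⊗ e₍₂₎ = e ⊗ e = e₍₁₎·e ⊗ e₍₂₎`. -/
theorem stmt11 (k H : Type*) [Field k] [Ring H] [HopfAlgebra k H]
    (r : H) (hr : OneDimPCM k r)
    (e : H) (he : e = r * HopfAlgebra.antipode (R := k) r) :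
    e * e = e
    ∧ (e ⊗ₜ[k] (1 : H)) * Coalgebra.comul (R := k) e = e ⊗ₜ[k] e
    ∧ Coalgebra.comul (R := k) e * (e ⊗ₜ[k] (1 : H)) = e ⊗ₜ[k] e := by
  obtain ⟨h₁, h₂, h₃, h₄, h₅⟩ := hr
  exact stmt11_general he h₁ h₂ h₃ h₄ h₅
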